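/- Let n ≥ 2 and p₁, p₂ ∈ ℂ[x] be polynomials of degree ≤ n-2. If Φ is a ℂ[x]-algebra automorphism of ℂ[x][z,t] such that Φ ≡ id mod x and Φ maps the ideal (xⁿ, z² + t³ + x·p₁(x)) onto the ideal (xⁿ, z² + t³ + x·p₂(x)), then p₁ = p₂. -/

import Mathlib

open MvPolynomial

/-!
Modulo `x ^ (k + 1)` the automorphism `φ ≡ id mod x` is unipotent, so its iterates `φ ^ j` depend
polynomially on `j` and their derivative at `j = 0` is a vector field, the logarithm of `φ`. The
Jacobian of `φ` is `1`, so this field is divergence free, hence Hamiltonian with some `H`.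

Write `g = z ^ 2 + P(t)` and suppose `φ(g) + δ` lies in `(x ^ n, g)` with `x ^ k ∣ δ`. Modulo
`x ^ (k + 1)` with `k < n`, the elements `φ ^ j (g) + j δ` all lie in `(g)`, hence so does their
derivative, the Poisson bracket of `H` with `g` plus `δ`. With `H = a(t) + z b(t)` modulo `g`, the
`z`-free part of this relation is `2 P b' + P' b = -δ`, and comparing leading coefficients gives
`b = 0` and `δ = 0`. So `x ^ (k + 1) ∣ δ`, and induction on `k` yields `x ^ n ∣ δ`.
-/

section PolynomialSequences

open scoped Polynomial

lemma isUnit_natCast_of_ne_zero {A : Type*} [CommRing A] [Algebra ℚ A] {k : ℕ} (hk : k ≠ 0) :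
    IsUnit (k : A) := by
  simpa using (Nat.cast_ne_zero.2 hk : (k : ℚ) ≠ 0).isUnit.map (algebraMap ℚ A)

variable {A B : Type*} [CommRing A] [CommRing B]

lemma polynomial_eq_zero_of_forall_eval_natCast_eq_zero [Algebra ℚ A] {p : A[X]}
    (hp : ∀ j : ℕ, p.eval (j : A) = 0) : p = 0 := by
  by_contra hne
  have : Nontrivial A := Polynomial.nontrivial_iff.1 (nontrivial_of_ne _ _ hne)
  have hcoprime : Pairwise fun i j : ℕ =>
      IsCoprime (Polynomial.X - Polynomial.C (i : A)) (Polynomial.X - Polynomial.C (j : A)) := by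
    refine Std.Symm.pairwise_on (r := IsCoprime) _ |>.2 fun i j hij =>
      (Polynomial.isCoprime_X_sub_C_of_isUnit_sub ?_).symm
    rw [← Nat.cast_sub hij.le]
    exact isUnit_natCast_of_ne_zero (Nat.sub_ne_zero_of_lt hij)
  have hdvd : ∏ j ∈ Finset.range (p.natDegree + 1), (Polynomial.X - Polynomial.C (j : A)) ∣ p :=
    Finset.prod_dvd_of_coprime (fun i _ j _ hij => hcoprime hij)
      fun j _ => Polynomial.dvd_iff_isRoot.2 (hp j)
  refine (Polynomial.monic_prod_X_sub_C _ _).not_dvd_of_natDegree_lt hne ?_ hdvd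
  rw [Polynomial.natDegree_finsetProd_X_sub_C_eq_card]
  simp

/-- The sequence `s` is interpolated by a polynomial whose derivative at `0` is `v`. Over a
`ℚ`-algebra the polynomial, hence `v`, is unique. -/
def HasPolynomialDeriv (s : ℕ → A) (v : A) : Prop :=
  ∃ p : A[X], (∀ j : ℕ, p.eval (j : A) = s j) ∧ p.coeff 1 = v

namespace HasPolynomialDeriv

variable {s s' : ℕ → A} {v v' : A}

lemma const (a : A) : HasPolynomialDeriv (fun _ => a) 0 :=
  ⟨Polynomial.C a, by simp, by simp⟩

lemma natCast_mul (a : A) : HasPolynomialDeriv (fun j => j * a) a :=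
  ⟨Polynomial.C a * Polynomial.X, fun j => by simpa using mul_comm a j, by simp⟩

lemma add (hs : HasPolynomialDeriv s v) (hs' : HasPolynomialDeriv s' v') :
    HasPolynomialDeriv (fun j => s j + s' j) (v + v') := by
  obtain ⟨p, hp, rfl⟩ := hs
  obtain ⟨p', hp', rfl⟩ := hs'
  exact ⟨p + p', by simp [hp, hp'], by simp⟩

lemma mul (hs : HasPolynomialDeriv s v) (hs' : HasPolynomialDeriv s' v') :
    HasPolynomialDeriv (fun j => s j * s' j) (s 0 * v' + v * s' 0) := by
  obtain ⟨p, hp, rfl⟩ := hs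
  obtain ⟨p', hp', rfl⟩ := hs'
  refine ⟨p * p', by simp [hp, hp'], ?_⟩
  simp [Polynomial.mul_coeff_one, ← hp, ← hp', Polynomial.coeff_zero_eq_eval_zero]

lemma map (f : A →+ B) (hs : HasPolynomialDeriv s v) :
    HasPolynomialDeriv (fun j => f (s j)) (f v) := by
  obtain ⟨p, hp, rfl⟩ := hs
  simp only [← hp]
  clear hp
  induction p using Polynomial.induction_on' with
  | add p q hp hq => simpa using hp.add hq
  | monomial n a =>
    refine ⟨Polynomial.monomial n (f a), fun j => ?_, ?_⟩
    · simp only [Polynomial.eval_monomial, ← Nat.cast_pow, ← nsmul_eq_mul', map_nsmul]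
    · simp [Polynomial.coeff_monomial, apply_ite f]

lemma sub (hs : HasPolynomialDeriv s v) (hs' : HasPolynomialDeriv s' v') :
    HasPolynomialDeriv (fun j => s j - s' j) (v - v') := by
  simpa [sub_eq_add_neg] using hs.add (hs'.map (-AddMonoidHom.id A))

lemma aeval {R : Type*} [CommSemiring R] [Algebra R A] (hs : HasPolynomialDeriv s v) (P : R[X]) :
    HasPolynomialDeriv (fun j => Polynomial.aeval (s j) P)
      (Polynomial.aeval (s 0) (Polynomial.derivative P) * v) := by
  induction P using Polynomial.induction_on with
  | C a => simpa using const (algebraMap R A a)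
  | add P Q hP hQ => simpa [add_mul] using hP.add hQ
  | monomial n a ih =>
    rw [pow_succ, ← mul_assoc]
    generalize Polynomial.C a * Polynomial.X ^ n = Q at ih ⊢
    convert! ih.mul hs using 1
    · simp
    · simp only [Polynomial.derivative_mul, Polynomial.derivative_X, map_add, map_mul, map_one,
        Polynomial.aeval_X]
      ring

lemma mem_of_forall_mem [Algebra ℚ A] (hs : HasPolynomialDeriv s v) {I : Ideal A}
    (hI : ∀ j, s j ∈ I) : v ∈ I := by
  obtain ⟨p, hp, rfl⟩ := hs
  have hzero : p.map (Ideal.Quotient.mk I) = 0 :=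
    polynomial_eq_zero_of_forall_eval_natCast_eq_zero fun j => by
      rw [Polynomial.eval_natCast_map, hp, Ideal.Quotient.eq_zero_iff_mem]
      exact hI j
  rw [← Ideal.Quotient.eq_zero_iff_mem, ← Polynomial.coeff_map, hzero, Polynomial.coeff_zero]

lemma eq_zero_of_forall_eq [Algebra ℚ A] (hs : HasPolynomialDeriv s v) {a : A}
    (ha : ∀ j, s j = a) : v = 0 := by
  have h := (hs.sub (const a)).mem_of_forall_mem (I := ⊥) (by simp [ha])
  simpa using h

lemma sum {ι : Type*} (S : Finset ι) {f : ι → ℕ → A} {w : ι → A}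
    (h : ∀ i, HasPolynomialDeriv (f i) (w i)) :
    HasPolynomialDeriv (fun j => ∑ i ∈ S, f i j) (∑ i ∈ S, w i) := by
  choose p hp hw using h
  exact ⟨∑ i ∈ S, p i, by simp [Polynomial.eval_finsetSum, hp], by simp [hw]⟩

lemma exists_choose [Algebra ℚ A] (i : ℕ) :
    ∃ v, HasPolynomialDeriv (fun j => (j.choose i : A)) v := by
  refine ⟨_, Polynomial.C (algebraMap ℚ A (i.factorial : ℚ)⁻¹) * descPochhammer A i,
    fun j => ?_, rfl⟩
  rw [Polynomial.eval_C_mul, descPochhammer_eval_eq_descFactorial,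
    Nat.descFactorial_eq_factorial_mul_choose, Nat.cast_mul, ← mul_assoc,
    ← map_natCast (algebraMap ℚ A) i.factorial, ← map_mul,
    inv_mul_cancel₀ (by positivity), map_one, one_mul]

lemma exists_pow_apply [Algebra ℚ A] {R : Type*} [Semiring R] [Module R A]
    (L : Module.End R A) {a : A} {N : ℕ} (hN : ((L - 1) ^ N) a = 0) :
    ∃ v, HasPolynomialDeriv (fun j => (L ^ j) a) v := by
  have hvanish (i : ℕ) (hi : N ≤ i) : ((L - 1) ^ i) a = 0 := by
    rw [← Nat.sub_add_cancel hi, pow_add, Module.End.mul_apply, hN, map_zero]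
  have hbinomial (j : ℕ) : (L ^ j) a = ∑ i ∈ Finset.range N, j.choose i * ((L - 1) ^ i) a := by
    have hexpand : (L ^ j) a = ∑ i ∈ Finset.range (j + 1), j.choose i * ((L - 1) ^ i) a := by
      conv_lhs => rw [← sub_add_cancel L 1, (Commute.one_right _).add_pow]
      simp [← nsmul_eq_mul, ← nsmul_eq_mul', LinearMap.sum_apply]
    rw [hexpand]
    rcases le_total N (j + 1) with h | h
    · exact Finset.eventually_constant_sum (fun i hi => by rw [hvanish i hi, mul_zero]) h
    · refine (Finset.eventually_constant_sum (fun i hi => ?_) h).symm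
      rw [Nat.choose_eq_zero_of_lt hi, Nat.cast_zero, zero_mul]
  choose w hw using exists_choose (A := A)
  simp only [hbinomial]
  exact ⟨_, sum _ fun i => (hw i).mul (const _)⟩

end HasPolynomialDeriv
end PolynomialSequences

section Jacobian

variable {σ R S : Type*} [CommRing R] [CommRing S]

/-- The homomorphism obtained from `φ` by applying `q` to the coefficients of the images of the
variables. -/
noncomputable def baseChange (q : R →+* S) (φ : MvPolynomial σ R →ₐ[R] MvPolynomial σ R) :
    MvPolynomial σ S →ₐ[S] MvPolynomial σ S :=
  aeval fun i => map q (φ (X i))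

@[simp]
lemma baseChange_X (q : R →+* S) (φ : MvPolynomial σ R →ₐ[R] MvPolynomial σ R) (i : σ) :
    baseChange q φ (X i) = map q (φ (X i)) :=
  aeval_X _ i

lemma baseChange_map (q : R →+* S) (φ : MvPolynomial σ R →ₐ[R] MvPolynomial σ R)
    (f : MvPolynomial σ R) : baseChange q φ (map q f) = map q (φ f) := by
  induction f using MvPolynomial.induction_on with
  | C a => simp [← algebraMap_eq]
  | add f g hf hg => simp only [map_add, hf, hg]
  | mul_X f i hf => simp only [map_mul, map_X, hf, baseChange_X]

variable [Fintype σ]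

lemma pderiv_algHom_apply (φ : MvPolynomial σ R →ₐ[R] MvPolynomial σ R) (i : σ)
    (f : MvPolynomial σ R) : pderiv i (φ f) = ∑ j, φ (pderiv j f) * pderiv i (φ (X j)) := by
  classical
  induction f using MvPolynomial.induction_on with
  | C a => simp [← algebraMap_eq]
  | add f g hf hg => simp only [map_add, hf, hg, add_mul, Finset.sum_add_distrib]
  | mul_X f k hf =>
    simp only [map_mul, pderiv_mul, map_add, hf, add_mul, Finset.sum_add_distrib, pderiv_X]
    congr 1
    · rw [Finset.sum_mul]
      exact Finset.sum_congr rfl fun j _ => mul_right_comm _ _ _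
    · simp [Pi.single_apply]

variable [DecidableEq σ]

/-- The Jacobian matrix of an endomorphism, with the image of the `j`-th variable in column `j`. -/
noncomputable def jacobianMatrix (φ : MvPolynomial σ R →ₐ[R] MvPolynomial σ R) :
    Matrix σ σ (MvPolynomial σ R) :=
  Matrix.of fun i j => pderiv i (φ (X j))

/-- The Jacobian determinant of an endomorphism of a polynomial ring. -/
noncomputable def jacobian (φ : MvPolynomial σ R →ₐ[R] MvPolynomial σ R) : MvPolynomial σ R :=
  (jacobianMatrix φ).det

lemma jacobian_one : jacobian (1 : MvPolynomial σ R →ₐ[R] MvPolynomial σ R) = 1 := by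
  rw [jacobian, ← Matrix.det_one (n := σ)]
  congr 1
  ext1 i j
  simp [jacobianMatrix, Matrix.one_apply, pderiv_X, Pi.single_apply, eq_comm]

lemma jacobian_mul (φ ψ : MvPolynomial σ R →ₐ[R] MvPolynomial σ R) :
    jacobian (φ * ψ) = jacobian φ * φ (jacobian ψ) := by
  have hmatrix : jacobianMatrix (φ * ψ) = jacobianMatrix φ * φ.mapMatrix (jacobianMatrix ψ) := by
    ext1 i j
    rw [Matrix.mul_apply, jacobianMatrix, Matrix.of_apply, AlgHom.mul_apply, pderiv_algHom_apply]
    exact Finset.sum_congr rfl fun k _ => mul_comm _ _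
  rw [jacobian, hmatrix, Matrix.det_mul, ← AlgHom.map_det, jacobian, jacobian]

lemma jacobian_pow_eq_one {φ : MvPolynomial σ R →ₐ[R] MvPolynomial σ R} (hφ : jacobian φ = 1)
    (j : ℕ) : jacobian (φ ^ j) = 1 := by
  induction j with
  | zero => exact jacobian_one
  | succ j ih => rw [pow_succ, jacobian_mul, ih, hφ, map_one, one_mul]

lemma jacobian_baseChange (q : R →+* S) (φ : MvPolynomial σ R →ₐ[R] MvPolynomial σ R) :
    jacobian (baseChange q φ) = map q (jacobian φ) := by
  have hmatrix : jacobianMatrix (baseChange q φ) = (map q).mapMatrix (jacobianMatrix φ) := by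
    ext1 i j
    simp [jacobianMatrix, pderiv_map]
  rw [jacobian, hmatrix, ← RingHom.map_det, jacobian]

open scoped Polynomial in
lemma jacobian_eq_one_of_mul_eq_one {K : Type*} [CommRing K] [IsDomain K]
    {φ ψ : MvPolynomial σ K[X] →ₐ[K[X]] MvPolynomial σ K[X]} (hψ : φ * ψ = 1)
    (hφ : ∀ i, C Polynomial.X ∣ φ (X i) - X i) : jacobian φ = 1 := by
  have hunit : IsUnit (jacobian φ) :=
    .of_mul_eq_one (φ (jacobian ψ)) (by rw [← jacobian_mul, hψ, jacobian_one])
  obtain ⟨r, hr, hconst⟩ := isUnit_iff_eq_C_of_isReduced.1 hunit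
  obtain ⟨a, -, rfl⟩ := Polynomial.isUnit_iff.1 hr
  have hspecial : baseChange (Polynomial.evalRingHom 0) φ = 1 := by
    refine MvPolynomial.algHom_ext fun i => ?_
    obtain ⟨w, hw⟩ := hφ i
    simpa [sub_eq_zero] using congrArg (map (Polynomial.evalRingHom 0)) hw
  have ha := jacobian_baseChange (Polynomial.evalRingHom 0) φ
  rw [hspecial, jacobian_one, hconst, map_C, Polynomial.coe_evalRingHom, Polynomial.eval_C] at ha
  rw [hconst, ← C_injective σ K (C_1.trans ha), map_one, map_one]

end Jacobian

section Antiderivative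

variable {σ R : Type*} [CommRing R] [Algebra ℚ R]

/-- The formal antiderivative with respect to the `i`-th variable that has no terms free of that
variable. -/
noncomputable def antideriv (i : σ) : MvPolynomial σ R →ₗ[R] MvPolynomial σ R :=
  (basisMonomials σ R).constr R fun m =>
    monomial (m + Finsupp.single i 1) (algebraMap ℚ R ((m i + 1 : ℕ) : ℚ)⁻¹)

lemma antideriv_monomial (i : σ) (m : σ →₀ ℕ) (a : R) :
    antideriv i (monomial m a) =
      monomial (m + Finsupp.single i 1) (a * algebraMap ℚ R ((m i + 1 : ℕ) : ℚ)⁻¹) := by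
  have hbasis : antideriv i (monomial m (1 : R)) =
      monomial (m + Finsupp.single i 1) (algebraMap ℚ R ((m i + 1 : ℕ) : ℚ)⁻¹) := by
    simpa [antideriv] using (basisMonomials σ R).constr_basis R (fun m =>
      monomial (m + Finsupp.single i 1) (algebraMap ℚ R ((m i + 1 : ℕ) : ℚ)⁻¹)) m
  rw [← mul_one a, ← smul_eq_mul, ← smul_monomial, map_smul, hbasis, smul_monomial, smul_eq_mul,
    smul_eq_mul, mul_one]

lemma pderiv_antideriv_self (i : σ) (f : MvPolynomial σ R) : pderiv i (antideriv i f) = f := by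
  induction f using MvPolynomial.induction_on' with
  | monomial m a =>
    have hcast : algebraMap ℚ R ((m i + 1 : ℕ) : ℚ)⁻¹ * ((m i + 1 : ℕ) : R) = 1 := by
      rw [← map_natCast (algebraMap ℚ R), ← map_mul, inv_mul_cancel₀ (by positivity), map_one]
    rw [antideriv_monomial, pderiv_monomial, add_tsub_cancel_right, Finsupp.add_apply,
      Finsupp.single_eq_same, mul_assoc, hcast, mul_one]
  | add f g hf hg => rw [map_add, map_add, hf, hg]

lemma pderiv_antideriv_of_ne {i j : σ} (hij : i ≠ j) (f : MvPolynomial σ R) :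
    pderiv j (antideriv i f) = antideriv i (pderiv j f) := by
  induction f using MvPolynomial.induction_on' with
  | monomial m a =>
    simp only [antideriv_monomial, pderiv_monomial, Finsupp.add_apply, Finsupp.tsub_apply,
      Finsupp.single_eq_of_ne hij, Finsupp.single_eq_of_ne hij.symm, add_zero, tsub_zero]
    by_cases hm : m j = 0
    · simp [hm]
    · rw [tsub_add_eq_add_tsub (by simpa [Nat.one_le_iff_ne_zero] using hm), mul_right_comm]
  | add f g hf hg => simp only [map_add, hf, hg]

lemma exists_pderiv_eq_of_divergence_eq_zero {a b : MvPolynomial (Fin 2) R}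
    (hab : pderiv 0 a + pderiv 1 b = 0) :
    ∃ H : MvPolynomial (Fin 2) R, a = -pderiv 1 H ∧ b = pderiv 0 H := by
  have hconst : pderiv 0 (a + pderiv 1 (antideriv 0 b)) = 0 := by
    rw [map_add, pderiv_antideriv_of_ne zero_ne_one, pderiv_antideriv_self, hab]
  refine ⟨antideriv 0 b - antideriv 1 (a + pderiv 1 (antideriv 0 b)), ?_, ?_⟩
  · rw [map_sub, pderiv_antideriv_self]
    ring
  · rw [map_sub, pderiv_antideriv_self, pderiv_antideriv_of_ne one_ne_zero, hconst, map_zero,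
      sub_zero]

end Antiderivative

section Hyperelliptic

open scoped Polynomial

variable {R S : Type*} [CommRing R] [CommRing S]

/-- The equation `z ^ 2 + P(t)` of a hyperelliptic curve, with `z = X 0` and `t = X 1`. -/
noncomputable def hyperelliptic (P : R[X]) : MvPolynomial (Fin 2) R :=
  X 0 ^ 2 + Polynomial.aeval (X 1) P

lemma hyperelliptic_add_C (P : R[X]) (r : R) :
    hyperelliptic (P + Polynomial.C r) = hyperelliptic P + C r := by
  simp [hyperelliptic, algebraMap_eq, add_assoc]

lemma map_hyperelliptic (q : R →+* S) (P : R[X]) :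
    map q (hyperelliptic P) = hyperelliptic (P.map q) := by
  simp [hyperelliptic, Polynomial.aeval_def, Polynomial.hom_eval₂, Polynomial.eval₂_map,
    algebraMap_eq, map_comp_C]

lemma finSuccEquiv_aeval_X_one (Q : R[X]) :
    finSuccEquiv R 1 (Polynomial.aeval (X 1) Q) = Polynomial.C (Polynomial.aeval (X 0) Q) := by
  rw [← Polynomial.aeval_algHom_apply, ← Polynomial.CAlgHom_apply (R := R),
    ← Polynomial.aeval_algHom_apply]
  congr 2
  exact finSuccEquiv_X_succ (j := 0)

lemma finSuccEquiv_hyperelliptic (P : R[X]) :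
    finSuccEquiv R 1 (hyperelliptic P) =
      Polynomial.X ^ 2 + Polynomial.C (Polynomial.aeval (X 0) P) := by
  rw [hyperelliptic, map_add, map_pow, finSuccEquiv_X_zero, finSuccEquiv_aeval_X_one]

lemma eq_zero_of_hyperelliptic_mul_eq_zero {P : R[X]} {f : MvPolynomial (Fin 2) R}
    (h : hyperelliptic P * f = 0) : f = 0 := by
  have himage := congrArg (finSuccEquiv R 1) h
  rw [map_mul, map_zero, finSuccEquiv_hyperelliptic] at himage
  exact (map_eq_zero_iff _ (finSuccEquiv R 1).injective).1
    ((Polynomial.monic_X_pow_add_C _ two_ne_zero).mul_right_eq_zero_iff.1 himage)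

lemma exists_eq_add_X_mul_add_hyperelliptic_mul (P : R[X]) (f : MvPolynomial (Fin 2) R) :
    ∃ (a b : R[X]) (h : MvPolynomial (Fin 2) R), f =
      Polynomial.aeval (X 1) a + X 0 * Polynomial.aeval (X 1) b + hyperelliptic P * h := by
  induction f using MvPolynomial.induction_on with
  | C r => exact ⟨Polynomial.C r, 0, 0, by simp [algebraMap_eq]⟩
  | add f f' hf hf' =>
    obtain ⟨a, b, h, rfl⟩ := hf
    obtain ⟨a', b', h', rfl⟩ := hf'
    refine ⟨a + a', b + b', h + h', ?_⟩
    simp only [map_add]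
    ring
  | mul_X f i hf =>
    obtain ⟨a, b, h, rfl⟩ := hf
    obtain rfl | rfl : i = 0 ∨ i = 1 := by lia
    · refine ⟨-(P * b), a, h * X 0 + Polynomial.aeval (X 1) b, ?_⟩
      simp only [hyperelliptic, map_neg, map_mul]
      ring
    · refine ⟨a * Polynomial.X, b * Polynomial.X, h * X 1, ?_⟩
      simp only [map_mul, Polynomial.aeval_X]
      ring

lemma eq_zero_of_X_sq_add_C_dvd {a b c : R}
    (h : Polynomial.X ^ 2 + Polynomial.C c ∣ Polynomial.C b * Polynomial.X + Polynomial.C a) :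
    a = 0 := by
  nontriviality R
  have hzero : Polynomial.C b * Polynomial.X + Polynomial.C a = 0 := by
    by_contra hne
    refine (Polynomial.monic_X_pow_add_C _ two_ne_zero).not_dvd_of_degree_lt hne ?_ h
    rw [Polynomial.degree_X_pow_add_C two_pos]
    exact Polynomial.degree_linear_le.trans_lt (by norm_num)
  simpa using congrArg (Polynomial.coeff · 0) hzero

lemma eq_zero_of_hyperelliptic_dvd {P a b : R[X]}
    (h : hyperelliptic P ∣ Polynomial.aeval (X 1) a + X 0 * Polynomial.aeval (X 1) b) : a = 0 := by
  have hdvd := map_dvd (finSuccEquiv R 1) h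
  rw [finSuccEquiv_hyperelliptic, map_add, map_mul, finSuccEquiv_X_zero, finSuccEquiv_aeval_X_one,
    finSuccEquiv_aeval_X_one, add_comm (Polynomial.C _), mul_comm] at hdvd
  exact transcendental_iff.1 (transcendental_X R 0) a (eq_zero_of_X_sq_add_C_dvd hdvd)

lemma coeff_X_mul_derivative (Q : R[X]) (n : ℕ) :
    (Polynomial.X * Q.derivative).coeff n = n * Q.coeff n := by
  cases n with
  | zero => simp
  | succ n => simp [Polynomial.coeff_derivative, mul_comm]

lemma natDegree_X_mul_derivative_le (Q : R[X]) :
    (Polynomial.X * Q.derivative).natDegree ≤ Q.natDegree :=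
  Polynomial.natDegree_le_iff_coeff_eq_zero.2 fun n hn => by
    rw [coeff_X_mul_derivative, Polynomial.coeff_eq_zero_of_natDegree_lt hn, mul_zero]

lemma eq_zero_of_two_mul_mul_derivative_add_eq_C [Algebra ℚ R] {P Q : R[X]} (hP : P.Monic)
    (hP2 : 2 ≤ P.natDegree) {κ : R}
    (h : 2 * P * Q.derivative + P.derivative * Q = Polynomial.C κ) : κ = 0 := by
  have hX : Polynomial.C 2 * (P * (Polynomial.X * Q.derivative)) +
      Polynomial.X * P.derivative * Q = Polynomial.X * Polynomial.C κ := by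
    rw [← h, Polynomial.C_ofNat]
    ring
  have htop : ((2 * Q.natDegree + P.natDegree : ℕ) : R) * Q.leadingCoeff = 0 := by
    have hcoeff := congrArg (Polynomial.coeff · (P.natDegree + Q.natDegree)) hX
    simp only [Polynomial.coeff_add, Polynomial.coeff_C_mul, Polynomial.coeff_mul_C,
      Polynomial.coeff_mul_add_eq_of_natDegree_le le_rfl (natDegree_X_mul_derivative_le Q),
      Polynomial.coeff_mul_add_eq_of_natDegree_le (natDegree_X_mul_derivative_le P) le_rfl,
      coeff_X_mul_derivative, hP.coeff_natDegree, Polynomial.coeff_natDegree,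
      Polynomial.coeff_X_of_ne_one (show P.natDegree + Q.natDegree ≠ 1 by lia)] at hcoeff
    push_cast
    linear_combination hcoeff
  have hQ : Q = 0 := Polynomial.leadingCoeff_eq_zero.1 <|
    (isUnit_natCast_of_ne_zero (by lia)).mul_right_eq_zero.1 htop
  simpa [hQ] using h.symm

lemma eq_zero_of_hyperelliptic_dvd_of_divergence_eq_zero [Algebra ℚ R] {P : R[X]} (hP : P.Monic)
    (hP2 : 2 ≤ P.natDegree) {a b : MvPolynomial (Fin 2) R} {κ : R}
    (hab : pderiv 0 a + pderiv 1 b = 0)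
    (h : hyperelliptic P ∣
      2 * X 0 * a + Polynomial.aeval (X 1) (Polynomial.derivative P) * b + C κ) : κ = 0 := by
  obtain ⟨H, rfl, rfl⟩ := exists_pderiv_eq_of_divergence_eq_zero hab
  obtain ⟨c, d, K, rfl⟩ := exists_eq_add_X_mul_add_hyperelliptic_mul P H
  have hode : 2 * P * d.derivative + P.derivative * d + Polynomial.C κ = 0 := by
    refine eq_zero_of_hyperelliptic_dvd (P := P) (b := -2 * c.derivative) ?_
    obtain ⟨L, hL⟩ := h
    refine ⟨L + 2 * Polynomial.aeval (X 1) d.derivative + 2 * X 0 * pderiv 1 K -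
      Polynomial.aeval (X 1) P.derivative * pderiv 0 K, ?_⟩
    simp only [hyperelliptic, map_add, map_mul, map_neg, map_ofNat, Polynomial.aeval_C,
      algebraMap_eq, Derivation.map_aeval, Derivation.leibniz, Derivation.leibniz_pow,
      pderiv_X_self, pderiv_X_of_ne zero_ne_one, pderiv_X_of_ne one_ne_zero,
      smul_eq_mul, nsmul_eq_mul] at hL ⊢
    push_cast at hL
    linear_combination hL
  have hneg : 2 * P * d.derivative + P.derivative * d = Polynomial.C (-κ) := by
    rw [map_neg, eq_neg_iff_add_eq_zero, hode]
  exact neg_eq_zero.1 (eq_zero_of_two_mul_mul_derivative_add_eq_C hP hP2 hneg)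

end Hyperelliptic

section Unipotent

variable {σ R : Type*} [CommRing R] {x : R} {φ : MvPolynomial σ R →ₐ[R] MvPolynomial σ R}

lemma C_dvd_algHom_apply_sub (hφ : ∀ i, C x ∣ φ (X i) - X i) (f : MvPolynomial σ R) :
    C x ∣ φ f - f := by
  induction f using MvPolynomial.induction_on with
  | C r => simp [← algebraMap_eq]
  | add f g hf hg => simpa only [map_add, add_sub_add_comm] using dvd_add hf hg
  | mul_X f i hf =>
    have hsplit : φ (f * X i) - f * X i = (φ f - f) * φ (X i) + f * (φ (X i) - X i) := by
      rw [map_mul]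
      ring
    rw [hsplit]
    exact dvd_add (hf.mul_right _) ((hφ i).mul_left f)

lemma C_pow_dvd_toEnd_sub_one_pow_apply (hφ : ∀ i, C x ∣ φ (X i) - X i) (k : ℕ)
    (f : MvPolynomial σ R) : C (x ^ k) ∣ ((AlgHom.toEnd φ - 1) ^ k) f := by
  induction k with
  | zero => simp
  | succ k ih =>
    obtain ⟨w, hw⟩ := ih
    rw [pow_succ' (AlgHom.toEnd φ - 1), Module.End.mul_apply, hw, ← smul_eq_C_mul, map_smul,
      smul_eq_C_mul, pow_succ, C_mul]
    exact mul_dvd_mul_left _ (C_dvd_algHom_apply_sub hφ w)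

lemma exists_hasPolynomialDeriv_pow_apply [Algebra ℚ R] (hx : IsNilpotent x)
    (hφ : ∀ i, C x ∣ φ (X i) - X i) (f : MvPolynomial σ R) :
    ∃ v, HasPolynomialDeriv (fun j => (φ ^ j) f) v := by
  obtain ⟨N, hN⟩ := hx
  have hzero : ((AlgHom.toEnd φ - 1) ^ N) f = 0 := by
    simpa [hN] using C_pow_dvd_toEnd_sub_one_pow_apply hφ N f
  simpa only [← map_pow] using! HasPolynomialDeriv.exists_pow_apply _ hzero

end Unipotent

section VectorField

variable {R : Type*} [CommRing R] {φ : MvPolynomial (Fin 2) R →ₐ[R] MvPolynomial (Fin 2) R}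
  {a b : MvPolynomial (Fin 2) R}

lemma divergence_eq_zero_of_jacobian_eq_one [Algebra ℚ R] (hφ : jacobian φ = 1)
    (ha : HasPolynomialDeriv (fun j => (φ ^ j) (X 0)) a)
    (hb : HasPolynomialDeriv (fun j => (φ ^ j) (X 1)) b) : pderiv 0 a + pderiv 1 b = 0 := by
  have hderiv (i : Fin 2) {s : ℕ → MvPolynomial (Fin 2) R} {v : MvPolynomial (Fin 2) R}
      (hs : HasPolynomialDeriv s v) : HasPolynomialDeriv (fun j => pderiv i (s j)) (pderiv i v) :=
    hs.map (pderiv i : Derivation R (MvPolynomial (Fin 2) R) _).toLinearMap.toAddMonoidHom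
  have hdet := ((hderiv 0 ha).mul (hderiv 1 hb)).sub ((hderiv 0 hb).mul (hderiv 1 ha))
  have hzero := hdet.eq_zero_of_forall_eq (a := 1) fun j => by
    rw [← jacobian_pow_eq_one hφ j, jacobian, Matrix.det_fin_two]
    rfl
  simpa [pderiv_X_of_ne zero_ne_one, pderiv_X_of_ne one_ne_zero, add_comm] using hzero

open scoped Polynomial in
lemma hasPolynomialDeriv_pow_apply_hyperelliptic
    (ha : HasPolynomialDeriv (fun j => (φ ^ j) (X 0)) a)
    (hb : HasPolynomialDeriv (fun j => (φ ^ j) (X 1)) b) (P : R[X]) :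
    HasPolynomialDeriv (fun j => (φ ^ j) (hyperelliptic P))
      (2 * X 0 * a + Polynomial.aeval (X 1) P.derivative * b) := by
  convert! (ha.mul ha).add (hb.aeval P) using 1
  · ext1 j
    rw [hyperelliptic, map_add, map_pow, sq, Polynomial.aeval_algHom_apply]
  · simp only [pow_zero, AlgHom.one_apply]
    ring

lemma dvd_pow_apply_add_natCast_mul {A : Type*} [CommRing A] [Algebra R A] {ψ : A →ₐ[R] A}
    {g u d : A} (hd : ψ d = d) (hud : u * d = d) (h : ψ g + d = u * g) (j : ℕ) :
    g ∣ (ψ ^ j) g + j * d := by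
  have hfix (j : ℕ) : (ψ ^ j) d = d := by
    rw [AlgHom.coe_pow, Function.iterate_fixed hd]
  induction j with
  | zero => simp
  | succ j ih =>
    have hstep : (ψ ^ (j + 1)) g + (j + 1 : ℕ) * d = (ψ ^ j) u * ((ψ ^ j) g + j * d) := by
      have hiterate := congrArg (ψ ^ j) h
      have hfix_mul := congrArg (ψ ^ j) hud
      simp only [map_add, map_mul, hfix] at hiterate hfix_mul
      rw [pow_succ, AlgHom.mul_apply]
      push_cast
      linear_combination hiterate - j * hfix_mul
    rw [hstep]
    exact ih.mul_left _

end VectorField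

section Rigidity

open scoped Polynomial

variable {R : Type*} [CommRing R] {P : R[X]} {x δ : R}
  {φ : MvPolynomial (Fin 2) R →ₐ[R] MvPolynomial (Fin 2) R} {u : MvPolynomial (Fin 2) R}

lemma C_dvd_of_C_dvd_hyperelliptic_mul {f : MvPolynomial (Fin 2) R}
    (h : C x ∣ hyperelliptic P * f) : C x ∣ f := by
  have hker (r : R) : Ideal.Quotient.mk (Ideal.span {x}) r = 0 ↔ x ∣ r := by
    rw [Ideal.Quotient.eq_zero_iff_mem, Ideal.mem_span_singleton]
  rw [C_dvd_iff_map_hom_eq_zero _ _ hker] at h ⊢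
  rw [map_mul, map_hyperelliptic] at h
  exact eq_zero_of_hyperelliptic_mul_eq_zero h

variable [Algebra ℚ R] (hP : P.Monic) (hP2 : 2 ≤ P.natDegree) (hjac : jacobian φ = 1)
  (hφ : ∀ i, C x ∣ φ (X i) - X i)
include hP hP2 hjac hφ

lemma eq_zero_of_apply_hyperelliptic_add_C_eq_mul (hx : IsNilpotent x) (hδ : x * δ = 0)
    (hu : C x ∣ u - 1) (h : φ (hyperelliptic P) + C δ = u * hyperelliptic P) : δ = 0 := by
  obtain ⟨a, ha⟩ := exists_hasPolynomialDeriv_pow_apply hx hφ (X 0)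
  obtain ⟨b, hb⟩ := exists_hasPolynomialDeriv_pow_apply hx hφ (X 1)
  have hud : u * C δ = C δ := by
    obtain ⟨w, hw⟩ := hu
    rw [sub_eq_iff_eq_add.1 hw, add_mul, mul_right_comm, ← C_mul, hδ, C_0, zero_mul, zero_add,
      one_mul]
  have horbit := dvd_pow_apply_add_natCast_mul (φ.commutes δ) hud h
  have htangent := (hasPolynomialDeriv_pow_apply_hyperelliptic ha hb P).add
    (HasPolynomialDeriv.natCast_mul (C δ))
  refine eq_zero_of_hyperelliptic_dvd_of_divergence_eq_zero hP hP2
    (divergence_eq_zero_of_jacobian_eq_one hjac ha hb) (Ideal.mem_span_singleton.1 ?_)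
  exact htangent.mem_of_forall_mem fun j => Ideal.mem_span_singleton.2 (horbit j)

lemma pow_succ_dvd_of_C_pow_dvd {k n : ℕ} (hkn : k < n) (hδ : x ^ k ∣ δ) (hu : C x ∣ u - 1)
    (h : C (x ^ n) ∣ φ (hyperelliptic P) + C δ - u * hyperelliptic P) : x ^ (k + 1) ∣ δ := by
  set q := Ideal.Quotient.mk (Ideal.span {x ^ (k + 1)})
  have hker (r : R) : q r = 0 ↔ x ^ (k + 1) ∣ r := by
    rw [Ideal.Quotient.eq_zero_iff_mem, Ideal.mem_span_singleton]
  rw [← hker]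
  nontriviality R ⧸ Ideal.span {x ^ (k + 1)}
  refine eq_zero_of_apply_hyperelliptic_add_C_eq_mul (x := q x) (hP.map q)
    (by rwa [hP.natDegree_map]) (φ := baseChange q φ) (u := map q u) ?_ ?_ ?_ ?_ ?_ ?_
  · rw [jacobian_baseChange, hjac, map_one]
  · intro i
    simpa using map_dvd (map q) (hφ i)
  · exact ⟨k + 1, by rw [← map_pow, (hker _).2 dvd_rfl]⟩
  · rw [← map_mul, hker, pow_succ']
    exact mul_dvd_mul_left x hδ
  · simpa using map_dvd (map q) hu
  · have hzero : map q (φ (hyperelliptic P) + C δ - u * hyperelliptic P) = 0 :=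
      (C_dvd_iff_map_hom_eq_zero q _ hker _).1 ((map_dvd C (pow_dvd_pow x hkn)).trans h)
    rw [map_sub, map_add, map_mul, map_C, ← baseChange_map, map_hyperelliptic] at hzero
    exact sub_eq_zero.1 hzero

lemma pow_dvd_of_apply_hyperelliptic_add_C_mem {n : ℕ} (hδ : x ∣ δ)
    (h : φ (hyperelliptic P) + C δ ∈ Ideal.span {C (x ^ n), hyperelliptic P}) : x ^ n ∣ δ := by
  obtain ⟨v, u, huv⟩ := Ideal.mem_span_pair.1 h
  have hdvd : C (x ^ n) ∣ φ (hyperelliptic P) + C δ - u * hyperelliptic P :=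
    ⟨v, by rw [← huv]; ring⟩
  suffices ∀ k ≤ n, x ^ k ∣ δ from this n le_rfl
  intro k hk
  induction k with
  | zero => simp
  | succ k ih =>
    have hu : C x ∣ u - 1 := by
      refine C_dvd_of_C_dvd_hyperelliptic_mul (P := P) ?_
      have hsplit : hyperelliptic P * (u - 1) = (φ (hyperelliptic P) - hyperelliptic P) + C δ -
          (φ (hyperelliptic P) + C δ - u * hyperelliptic P) := by ring
      rw [hsplit]
      exact dvd_sub (dvd_add (C_dvd_algHom_apply_sub hφ _) (map_dvd C hδ))
        ((map_dvd C (dvd_pow_self x (by lia))).trans hdvd)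
    exact pow_succ_dvd_of_C_pow_dvd hP hP2 hjac hφ hk (ih (by lia)) hu hdvd

end Rigidity

open scoped Polynomial in
theorem stmt5_general {K : Type*} [CommRing K] [Algebra ℚ K] {n : ℕ} (hn : 2 ≤ n) {F : K[X][X]}
    (hF : F.Monic) (hF2 : 2 ≤ F.natDegree) {p₁ p₂ : K[X]} (hd₁ : p₁.natDegree ≤ n - 2)
    (hd₂ : p₂.natDegree ≤ n - 2)
    {φ : MvPolynomial (Fin 2) K[X] →ₐ[K[X]] MvPolynomial (Fin 2) K[X]}
    (hjac : jacobian φ = 1) (hφ : ∀ i, C Polynomial.X ∣ φ (X i) - X i)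
    (hmem : φ (hyperelliptic F + C (Polynomial.X * p₁)) ∈
      Ideal.span {C (Polynomial.X ^ n), hyperelliptic F + C (Polynomial.X * p₂)}) :
    p₁ = p₂ := by
  have hdvd : Polynomial.X ^ n ∣ Polynomial.X * (p₁ - p₂) := by
    have hmonic : (F + Polynomial.C (Polynomial.X * p₂)).Monic :=
      hF.add_of_left (Polynomial.degree_C_le.trans_lt
        (Polynomial.natDegree_pos_iff_degree_pos.1 (by lia)))
    refine pow_dvd_of_apply_hyperelliptic_add_C_mem hmonic
      (by rwa [Polynomial.natDegree_add_C]) hjac hφ (dvd_mul_right _ _) ?_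
    have hshift : φ (hyperelliptic (F + Polynomial.C (Polynomial.X * p₂))) +
        C (Polynomial.X * (p₁ - p₂)) = φ (hyperelliptic F + C (Polynomial.X * p₁)) := by
      rw [hyperelliptic_add_C, mul_sub, C_sub, map_add, map_add, ← algebraMap_eq, φ.commutes,
        φ.commutes]
      ring
    rwa [hshift, hyperelliptic_add_C]
  ext d
  rcases lt_or_ge (d + 1) n with hd | hd
  · simpa [sub_eq_zero] using Polynomial.X_pow_dvd_iff.1 hdvd (d + 1) hd
  · rw [Polynomial.coeff_eq_zero_of_natDegree_lt (by lia),
      Polynomial.coeff_eq_zero_of_natDegree_lt (by lia)]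

/-- Lemma `lem:Equ-Crit`: if `p₁, p₂ ∈ ℂ[x]` have degree `≤ n-2` and a `ℂ[x]`-algebra
automorphism `Φ` of `ℂ[x][z,t]` with `Φ ≡ id mod x` maps the ideal
`(xⁿ, z² + t³ + x·p₁)` onto `(xⁿ, z² + t³ + x·p₂)`, then `p₁ = p₂`.
Here `ℂ[x][z,t]` is `MvPolynomial (Fin 2) (Polynomial ℂ)` with `z = X 0`, `t = X 1`. -/
theorem stmt5 (n : ℕ) (hn : 2 ≤ n) (p₁ p₂ : Polynomial ℂ)
    (hd₁ : p₁.natDegree ≤ n - 2) (hd₂ : p₂.natDegree ≤ n - 2)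
    (Φ : MvPolynomial (Fin 2) (Polynomial ℂ) ≃ₐ[Polynomial ℂ]
          MvPolynomial (Fin 2) (Polynomial ℂ))
    (hmodz : (C Polynomial.X : MvPolynomial (Fin 2) (Polynomial ℂ)) ∣ Φ (X 0) - X 0)
    (hmodt : (C Polynomial.X : MvPolynomial (Fin 2) (Polynomial ℂ)) ∣ Φ (X 1) - X 1)
    (hmap : Ideal.map (Φ : MvPolynomial (Fin 2) (Polynomial ℂ) →+*
          MvPolynomial (Fin 2) (Polynomial ℂ))
        (Ideal.span {(C (Polynomial.X ^ n) : MvPolynomial (Fin 2) (Polynomial ℂ)),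
          X 0 ^ 2 + X 1 ^ 3 + C (Polynomial.X * p₁)}) =
      Ideal.span {(C (Polynomial.X ^ n) : MvPolynomial (Fin 2) (Polynomial ℂ)),
        X 0 ^ 2 + X 1 ^ 3 + C (Polynomial.X * p₂)}) :
    p₁ = p₂ := by
  have hmod : ∀ i, C Polynomial.X ∣ Φ (X i) - X i := Fin.forall_fin_two.2 ⟨hmodz, hmodt⟩
  exact stmt5_general hn (Polynomial.monic_X_pow 3) (by simp) hd₁ hd₂
    (jacobian_eq_one_of_mul_eq_one Φ.comp_symm hmod) hmod (by
      simpa [hyperelliptic] using Ideal.map_le_iff_le_comap.1 hmap.le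
        (Ideal.subset_span (Set.mem_insert_of_mem _ rfl)))
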